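/- arXiv:1304.7936 — 2 statements merged into one kernel-verified Lean document; each statement's English description precedes it below -/
import Mathlib

section
/- Let f : [0,∞) → [0,∞) be a continuous operator monotone function. Then there exists a finite Borel measure μ on [0,1] such that f(x) = ∫_{[0,1]} (1 !_t x) dμ(t) for every x ∈ [0,∞). -/
/-!
Write `D(T, g)` for the divided difference of `g` at the nodes `T`. Given `2 m` nodes in `[0,∞)`,
the odd-numbered and the even-numbered ones interlace, so they are the spectra of a diagonal matrix
`A` and of a rank-one perturbation `A + w wᵀ`. Evaluating `f(A) ≤ f(A + w wᵀ)` at suitable vectors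
gives Löwner's inequality `0 ≤ D(T, q² f)` for `deg q < m`. Sending one node to infinity reverses
the sign on an odd number of nodes, and adjoining the node `0` then gives `D(T, q² f / x) ≤ 0` for
`T ⊂ (0,∞)`.

A real polynomial that is nonnegative on `(0,∞)` is a sum of terms `X ^ e * q²`, so the two
inequalities combine to `D(T, P f / x) ≤ 0` whenever `P ≥ 0` on `(-∞,0)` and `deg P < 2 m`. By
Lagrange interpolation this says that `∑ c x * f x ≥ 0` whenever `∑ c x * (x / (x + s)) ≥ 0` for all
`s > 0`. With `t = s / (1 + s)` the kernels become the harmonic means `1 !_t x` up to a factor, and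
the M. Riesz extension theorem followed by the Riesz–Markov–Kakutani theorem represents `f` on
`(0,∞)`. Continuity at `0` gives the case `x = 0`.
-/

open MeasureTheory Real ComplexOrder

/-- The `t`-weighted harmonic mean `1 !_t x` of `1` and `x`, for `t ∈ [0,1]`, `x ∈ [0,∞)`. -/
noncomputable def whm (t x : ℝ) : ℝ :=
  if t = 0 ∧ x = 0 then 1 else x / ((1 - t) * x + t)

/-- `f` is operator monotone on `[0,∞)`: for all `n` and all positive semidefinite complex
`n × n` matrices `A ≤ B` (Loewner order), `f(A) ≤ f(B)` via the continuous functional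
calculus. -/
def OperatorMonotone (f : ℝ → ℝ) : Prop :=
  ∀ (n : ℕ) (A B : Matrix (Fin n) (Fin n) ℂ),
    A.PosSemidef → B.PosSemidef → (B - A).PosSemidef →
    (cfc f B - cfc f A).PosSemidef

section FunctionalCalculus

open Polynomial Matrix

variable {n 𝕜 : Type*} [Fintype n] [DecidableEq n] [RCLike 𝕜] {B : Matrix n n 𝕜}

lemma exists_polynomial_cfc_eq_aeval (hB : B.IsHermitian) (f : ℝ → ℝ) (b : ℝ) :
    ∃ p : ℝ[X], p.eval b = f b ∧ cfc f B = aeval B p := by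
  classical
  let s : Finset ℝ := insert b (finite_real_spectrum (A := B)).toFinset
  have hp : ∀ x ∈ s, (Lagrange.interpolate s id f).eval x = f x := fun x hx =>
    Lagrange.eval_interpolate_at_node (v := id) f Function.injective_id.injOn hx
  refine ⟨Lagrange.interpolate s id f, hp b (Finset.mem_insert_self _ _), ?_⟩
  rw [← cfc_polynomial _ B hB.isSelfAdjoint]
  exact cfc_congr fun x hx => (hp x (by simp [s, hx])).symm

lemma cfc_mulVec_of_mulVec_eq_smul (hB : B.IsHermitian) (f : ℝ → ℝ) {b : ℝ} {u : n → 𝕜}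
    (hu : B *ᵥ u = (b : 𝕜) • u) : cfc f B *ᵥ u = (f b : 𝕜) • u := by
  obtain ⟨p, hpb, hp⟩ := exists_polynomial_cfc_eq_aeval hB f b
  have hend := Module.End.aeval_apply_of_mem_apply_eq_smul (f := toLinAlgEquiv' B)
    (p := p.map (algebraMap ℝ 𝕜)) (x := u) hu
  rw [aeval_algHom_apply, aeval_map_algebraMap, ← hp, eval_map,
    ← RCLike.algebraMap_eq_ofReal, eval₂_at_apply, hpb] at hend
  simpa using hend

lemma star_dotProduct_cfc_mulVec {ι : Type*} [Fintype ι] (hB : B.IsHermitian) (f : ℝ → ℝ)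
    {b : ι → ℝ} {u : ι → n → 𝕜} (hu : ∀ j, B *ᵥ u j = (b j : 𝕜) • u j) {x : n → 𝕜} {r : ι → 𝕜}
    (hx : x = ∑ j, r j • u j) :
    star x ⬝ᵥ cfc f B *ᵥ x = ∑ j, f (b j) * (r j * (star x ⬝ᵥ u j)) := by
  conv_lhs => rw [hx, mulVec_sum, ← hx, dotProduct_sum]
  refine Finset.sum_congr rfl fun j _ => ?_
  rw [mulVec_smul, cfc_mulVec_of_mulVec_eq_smul hB f (hu j), dotProduct_smul, dotProduct_smul,
    smul_eq_mul, smul_eq_mul]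
  ring

end FunctionalCalculus

section DividedDifference

open Polynomial Lagrange

variable {F ι κ : Type*} [Field F] {s : Finset ι} {v : ι → F}

lemma degree_nodal_sub_nodal_lt {t : Finset κ} {w : κ → F} (h : s.card = t.card) :
    (nodal s v - nodal t w).degree < s.card := by
  simpa using degree_sub_lt_left (p := nodal s v) (q := nodal t w)
    (by simp [h]) nodal_ne_zero (by simp [nodal_monic.leadingCoeff])

variable [DecidableEq ι]

/-- The divided difference of a function at the nodes `v i`, `i ∈ s`, as a linear functional of the
function. It is given by Lagrange's formula, so it is meaningful only when `v` is injective
on `s`. -/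
noncomputable def dividedDifference (s : Finset ι) (v : ι → F) : (F → F) →ₗ[F] F :=
  ∑ i ∈ s, nodalWeight s v i • LinearMap.proj (v i)

lemma dividedDifference_apply (s : Finset ι) (v : ι → F) (g : F → F) :
    dividedDifference s v g = ∑ i ∈ s, nodalWeight s v i * g (v i) := by
  simp [dividedDifference]

lemma dividedDifference_congr {g h : F → F} (hgh : ∀ i ∈ s, g (v i) = h (v i)) :
    dividedDifference s v g = dividedDifference s v h := by
  simp only [dividedDifference_apply]
  exact Finset.sum_congr rfl fun i hi => by rw [hgh i hi]

lemma dividedDifference_map [DecidableEq κ] (e : κ ↪ ι) (s : Finset κ) (v : ι → F) :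
    dividedDifference (s.map e) v = dividedDifference s (v ∘ e) := by
  ext g
  simp only [dividedDifference_apply, Finset.sum_map, nodalWeight, ← Finset.map_erase,
    Finset.prod_map, Function.comp_apply]

lemma dividedDifference_insert {i : ι} (hi : i ∉ s) (v : ι → F) (g : F → F) :
    dividedDifference (insert i s) v g =
      (∏ j ∈ s, (v i - v j)⁻¹) * g (v i) + dividedDifference s v fun x => (x - v i)⁻¹ * g x := by
  simp only [dividedDifference_apply, Finset.sum_insert hi, nodalWeight, Finset.erase_insert hi]
  refine congrArg _ (Finset.sum_congr rfl fun j hj => ?_)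
  rw [Finset.erase_insert_of_ne (ne_of_mem_of_not_mem hj hi).symm,
    Finset.prod_insert (fun h => hi (Finset.mem_of_mem_erase h))]
  ring

lemma dividedDifference_insert_sub_mul {i : ι} (hi : i ∉ s) (hv : ∀ j ∈ s, v j ≠ v i)
    (g : F → F) :
    dividedDifference (insert i s) v (fun x => (x - v i) * g x) = dividedDifference s v g := by
  rw [dividedDifference_insert hi, sub_self, zero_mul, mul_zero, zero_add]
  exact dividedDifference_congr fun j hj => inv_mul_cancel_left₀ (sub_ne_zero.mpr (hv j hj)) _

lemma dividedDifference_univ_sumElim [DecidableEq κ] [Fintype ι] [Fintype κ] (a : ι → F) (b : κ → F)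
    (g : F → F) :
    dividedDifference Finset.univ (Sum.elim a b) g =
      ∑ i, nodalWeight Finset.univ a i * ((nodal Finset.univ b).eval (a i))⁻¹ * g (a i) +
      ∑ j, nodalWeight Finset.univ b j * ((nodal Finset.univ a).eval (b j))⁻¹ * g (b j) := by
  have herase_inl (i : ι) : (Finset.univ : Finset (ι ⊕ κ)).erase (.inl i) =
      (Finset.univ.erase i).disjSum Finset.univ := by ext (_ | _) <;> simp
  have herase_inr (j : κ) : (Finset.univ : Finset (ι ⊕ κ)).erase (.inr j) =
      Finset.univ.disjSum (Finset.univ.erase j) := by ext (_ | _) <;> simp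
  simp only [dividedDifference_apply, Fintype.sum_sum_type, nodalWeight, herase_inl, herase_inr,
    Finset.prod_disjSum, Sum.elim_inl, Sum.elim_inr, eval_nodal, Finset.prod_inv_distrib, mul_inv]
  exact congrArg _ (Finset.sum_congr rfl fun j _ => by ring)

lemma sum_nodalWeight_mul_eval_div_sub (hv : Set.InjOn v s) {q : F[X]} (hq : q.degree < s.card)
    {z : F} (hz : ∀ i ∈ s, z ≠ v i) :
    ∑ i ∈ s, nodalWeight s v i * q.eval (v i) / (z - v i) = q.eval z / (nodal s v).eval z := by
  have hinterp := eval_interpolate_not_at_node (fun i => q.eval (v i)) hz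
  rw [← eq_interpolate hv hq] at hinterp
  rw [hinterp, mul_div_cancel_left₀ _ (eval_nodal_not_at_node hz)]
  exact Finset.sum_congr rfl fun i _ => by ring

lemma sum_nodalWeight_mul_eval_nodal_div_sub (hv : Set.InjOn v s) {t : Finset κ} {w : κ → F}
    (hst : s.card = t.card) {j : κ} (hj : j ∈ t) (hw : ∀ i ∈ s, w j ≠ v i) :
    ∑ i ∈ s, nodalWeight s v i * (nodal t w).eval (v i) / (w j - v i) = -1 := by
  have h := sum_nodalWeight_mul_eval_div_sub hv
    (degree_nodal_sub_nodal_lt (v := v) (w := w) hst) hw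
  rw [eval_sub, eval_nodal_at_node hj, sub_zero, div_self (eval_nodal_not_at_node hw)] at h
  rw [← neg_eq_iff_eq_neg, ← h, ← Finset.sum_neg_distrib]
  refine Finset.sum_congr rfl fun i hi => ?_
  rw [eval_sub, eval_nodal_at_node hi]
  ring

end DividedDifference

section Interlacing

open Polynomial Lagrange

/-- The nodes `a` and `b` strictly interlace, beginning with `a`: for `Fin m`-indexed families this
says `a 0 < b 0 < a 1 < b 1 < ⋯ < a (m - 1) < b (m - 1)`. -/
structure StrictlyInterlace {ι α : Type*} [LT ι] [LT α] (a b : ι → α) : Prop where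
  left_lt_right (i : ι) : a i < b i
  right_lt_left {i j : ι} (h : i < j) : b i < a j

namespace StrictlyInterlace

section LinearOrder

variable {ι α : Type*} [LinearOrder ι] [Preorder α] {a b : ι → α}

lemma strictMono_left (h : StrictlyInterlace a b) : StrictMono a :=
  fun i _ hij => (h.left_lt_right i).trans (h.right_lt_left hij)

lemma strictMono_right (h : StrictlyInterlace a b) : StrictMono b :=
  fun _ j hij => (h.right_lt_left hij).trans (h.left_lt_right j)

lemma left_ne_right (h : StrictlyInterlace a b) (i j : ι) : a i ≠ b j := by
  rcases lt_or_ge j i with hji | hij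
  · exact (h.right_lt_left hji).ne'
  · exact ((h.strictMono_left.monotone hij).trans_lt (h.left_lt_right j)).ne

lemma injective_sumElim (h : StrictlyInterlace a b) : Function.Injective (Sum.elim a b) :=
  h.strictMono_left.injective.sumElim h.strictMono_right.injective h.left_ne_right

end LinearOrder

variable {ι F : Type*} [LinearOrder ι] [Fintype ι] [Field F] [LinearOrder F]
  [IsStrictOrderedRing F] {a b : ι → F}

lemma nodalWeight_mul_eval_nodal_nonpos (h : StrictlyInterlace a b) (i : ι) :
    nodalWeight Finset.univ a i * (nodal Finset.univ b).eval (a i) ≤ 0 := by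
  rw [nodalWeight, eval_nodal, ← Finset.mul_prod_erase _ _ (Finset.mem_univ i), mul_left_comm,
    ← Finset.prod_mul_distrib]
  refine mul_nonpos_of_nonpos_of_nonneg (sub_nonpos.mpr (h.left_lt_right i).le)
    (Finset.prod_nonneg fun k hk => ?_)
  rcases (Finset.ne_of_mem_erase hk).lt_or_gt with hki | hik
  · exact mul_nonneg (inv_nonneg.mpr (sub_nonneg.mpr (h.strictMono_left hki).le))
      (sub_nonneg.mpr (h.right_lt_left hki).le)
  · exact mul_nonneg_of_nonpos_of_nonpos
      (inv_nonpos.mpr (sub_nonpos.mpr (h.strictMono_left hik).le))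
      (sub_nonpos.mpr ((h.strictMono_left hik).trans (h.left_lt_right k)).le)

end StrictlyInterlace

lemma exists_strictlyInterlace_image_eq {α : Type*} [LinearOrder α] {m : ℕ} {s : Finset α}
    (hs : s.card = 2 * m) :
    ∃ a b : Fin m → α, StrictlyInterlace a b ∧ Finset.univ.image (Sum.elim a b) = s := by
  let y := s.orderEmbOfFin hs
  have hy : ∀ i, y i ∈ s := s.orderEmbOfFin_mem hs
  refine ⟨fun i => y ⟨2 * i, by omega⟩, fun i => y ⟨2 * i + 1, by omega⟩, ?_⟩
  have hab : StrictlyInterlace (fun i : Fin m => y ⟨2 * i, by omega⟩)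
      (fun i : Fin m => y ⟨2 * i + 1, by omega⟩) :=
    ⟨fun i => y.strictMono (Nat.lt_succ_self _), fun {i j} h => y.strictMono (by
      simp only [Fin.lt_def] at h ⊢; omega)⟩
  refine ⟨hab, Finset.eq_of_subset_of_card_le ?_ ?_⟩
  · rintro _ hx
    obtain ⟨i | i, -, rfl⟩ := Finset.mem_image.mp hx <;> exact hy _
  · rw [Finset.card_image_of_injective _ hab.injective_sumElim, hs]
    simp [two_mul]

end Interlacing

section Loewner

open Polynomial Lagrange Matrix Filter

/-- `f` is matrix monotone of order `n` on `[0,∞)`: the condition that `OperatorMonotone` imposes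
on matrices of one fixed size. -/
def MatrixMonotone (n : ℕ) (f : ℝ → ℝ) : Prop :=
  ∀ A B : Matrix (Fin n) (Fin n) ℂ,
    A.PosSemidef → B.PosSemidef → (B - A).PosSemidef → (cfc f B - cfc f A).PosSemidef

lemma OperatorMonotone.matrixMonotone {f : ℝ → ℝ} (hf : OperatorMonotone f) (n : ℕ) :
    MatrixMonotone n f :=
  hf n

lemma diagonal_add_vecMulVec_mulVec_div_sub {n K : Type*} [Fintype n] [DecidableEq n] [Field K]
    {a w w' : n → K} {z : K} (hz : ∀ i, z ≠ a i) (hsec : ∑ i, w' i * (w i / (z - a i)) = 1) :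
    (diagonal a + vecMulVec w w') *ᵥ (fun i => w i / (z - a i)) =
      z • fun i => w i / (z - a i) := by
  have hsec' : w' ⬝ᵥ (fun i => w i / (z - a i)) = 1 := hsec
  ext i
  have hzi : z - a i ≠ 0 := sub_ne_zero.mpr (hz i)
  simp only [add_mulVec, vecMulVec_mulVec, hsec', Pi.add_apply, mulVec_diagonal, Pi.smul_apply,
    MulOpposite.op_one, one_smul, smul_eq_mul]
  field_simp
  ring

variable {m : ℕ} {f : ℝ → ℝ}

lemma MatrixMonotone.sum_le_sum_of_eigenvectors (hf : MatrixMonotone m f)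
    {A B : Matrix (Fin m) (Fin m) ℂ} (hA : A.PosSemidef) (hB : B.PosSemidef)
    (hAB : (B - A).PosSemidef) {ι κ : Type*} [Fintype ι] [Fintype κ] {a : ι → ℝ} {b : κ → ℝ}
    {u : ι → Fin m → ℂ} {v : κ → Fin m → ℂ} (hu : ∀ i, A *ᵥ u i = (a i : ℂ) • u i)
    (hv : ∀ j, B *ᵥ v j = (b j : ℂ) • v j) {x : Fin m → ℂ} {r : ι → ℂ} {s : κ → ℂ}
    (hxu : x = ∑ i, r i • u i) (hxv : x = ∑ j, s j • v j) :
    ∑ i, (f (a i) : ℂ) * (r i * (star x ⬝ᵥ u i)) ≤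
      ∑ j, (f (b j) : ℂ) * (s j * (star x ⬝ᵥ v j)) := by
  have h := (hf A B hA hB hAB).dotProduct_mulVec_nonneg x
  rwa [sub_mulVec, dotProduct_sub, star_dotProduct_cfc_mulVec hB.isHermitian f hv hxv,
    star_dotProduct_cfc_mulVec hA.isHermitian f hu hxu, sub_nonneg] at h

-- For `A = diagonal a` and `w = √ρ`, the secular equation `hsec` says that the `b j` are the
-- eigenvalues of `A + w wᵀ ≥ A`, with eigenvectors `w i / (b j - a i)`; the claim is
-- `⟨x, f(A) x⟩ ≤ ⟨x, f(A + w wᵀ) x⟩` for `x i = w i * y i`.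
lemma MatrixMonotone.sum_le_sum_of_secular (hf : MatrixMonotone m f) {a b ρ r y : Fin m → ℝ}
    (ha : ∀ i, 0 ≤ a i) (hab : ∀ i j, a i ≠ b j) (hρ : ∀ i, 0 ≤ ρ i)
    (hsec : ∀ j, ∑ i, ρ i / (b j - a i) = 1) (hy : ∀ i, y i = ∑ j, r j / (b j - a i)) :
    ∑ i, f (a i) * (ρ i * y i ^ 2) ≤ ∑ j, f (b j) * (r j * ∑ i, ρ i * y i / (b j - a i)) := by
  let A : Matrix (Fin m) (Fin m) ℂ := diagonal fun i => (a i : ℂ)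
  let w : Fin m → ℂ := fun i => (√(ρ i) : ℝ)
  let u : Fin m → Fin m → ℂ := fun j i => w i / (b j - a i)
  let x : Fin m → ℂ := fun i => w i * y i
  have hw (i : Fin m) : star (w i) * w i = ρ i := by
    simp only [w, Complex.star_def, Complex.conj_ofReal, ← Complex.ofReal_mul,
      Real.mul_self_sqrt (hρ i)]
  have hstar (i : Fin m) : star x i = star (w i) * y i := by simp [x]
  have hA : A.PosSemidef := PosSemidef.diagonal fun i => by simpa using ha i
  have hR : (vecMulVec w (star w)).PosSemidef := posSemidef_vecMulVec_self_star w
  have hAu (i : Fin m) : A *ᵥ Pi.single i 1 = (a i : ℂ) • Pi.single i 1 := by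
    simp [A, ← Pi.single_smul]
  have hBu (j : Fin m) : (A + vecMulVec w (star w)) *ᵥ u j = (b j : ℂ) • u j := by
    refine diagonal_add_vecMulVec_mulVec_div_sub
      (fun i => Complex.ofReal_injective.ne (hab i j).symm) ?_
    simp only [Pi.star_apply, ← mul_div_assoc, hw]
    exact_mod_cast hsec j
  have hxA : x = ∑ i, x i • Pi.single i 1 := pi_eq_sum_univ' x
  have hxB : x = ∑ j, (r j : ℂ) • u j := by
    ext i
    simp only [x, u, hy, Complex.ofReal_sum, Finset.mul_sum, Finset.sum_apply, Pi.smul_apply,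
      smul_eq_mul]
    exact Finset.sum_congr rfl fun j _ => by push_cast; ring
  have hxx (i : Fin m) : x i * star x i = (ρ i * y i ^ 2 : ℝ) := by
    rw [hstar, Complex.ofReal_mul, ← hw, Complex.ofReal_pow]
    ring
  have hxu (j : Fin m) : star x ⬝ᵥ u j = (∑ i, ρ i * y i / (b j - a i) : ℝ) := by
    rw [dotProduct, Complex.ofReal_sum]
    refine Finset.sum_congr rfl fun i _ => ?_
    rw [hstar, Complex.ofReal_div, Complex.ofReal_mul, ← hw, Complex.ofReal_sub]
    ring
  have hmono := hf.sum_le_sum_of_eigenvectors hA (hA.add hR) (by simpa using hR) hAu hBu hxA hxB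
  simp only [hxu, dotProduct_single_one, hxx] at hmono
  exact_mod_cast hmono

theorem MatrixMonotone.dividedDifference_nonneg_of_strictlyInterlace (hf : MatrixMonotone m f)
    {a b : Fin m → ℝ} (ha : ∀ i, 0 ≤ a i) (hab : StrictlyInterlace a b) {q : ℝ[X]}
    (hq : q.degree < m) :
    0 ≤ dividedDifference Finset.univ (Sum.elim a b) fun x => q.eval x ^ 2 * f x := by
  let ρ : Fin m → ℝ := fun i => -(nodalWeight Finset.univ a i * (nodal Finset.univ b).eval (a i))
  let y : Fin m → ℝ := fun i => -(q.eval (a i) / (nodal Finset.univ b).eval (a i))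
  have hNb (i : Fin m) : (nodal Finset.univ b).eval (a i) ≠ 0 :=
    eval_nodal_not_at_node fun j _ => hab.left_ne_right i j
  have hsec (j : Fin m) : ∑ i, ρ i / (b j - a i) = 1 := by
    simp only [ρ, neg_div, Finset.sum_neg_distrib]
    rw [sum_nodalWeight_mul_eval_nodal_div_sub hab.strictMono_left.injective.injOn rfl
      (Finset.mem_univ j) fun i _ => (hab.left_ne_right i j).symm, neg_neg]
  have hy (i : Fin m) :
      y i = ∑ j, nodalWeight Finset.univ b j * q.eval (b j) / (b j - a i) := by
    simp only [y]
    rw [← sum_nodalWeight_mul_eval_div_sub hab.strictMono_right.injective.injOn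
      (by simpa using hq) fun j _ => hab.left_ne_right i j, ← Finset.sum_neg_distrib]
    exact Finset.sum_congr rfl fun j _ => by rw [← neg_sub (b j), div_neg, neg_neg]
  have hinner (j : Fin m) : ∑ i, ρ i * y i / (b j - a i) =
      q.eval (b j) / (nodal Finset.univ a).eval (b j) := by
    rw [← sum_nodalWeight_mul_eval_div_sub hab.strictMono_left.injective.injOn
      (by simpa using hq) fun i _ => (hab.left_ne_right i j).symm]
    exact Finset.sum_congr rfl fun i _ => by simp only [ρ, y]; field [hNb i]
  have hmono := hf.sum_le_sum_of_secular ha hab.left_ne_right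
    (fun i => neg_nonneg.mpr (hab.nodalWeight_mul_eval_nodal_nonpos i)) hsec hy
  rw [dividedDifference_univ_sumElim, add_comm, ← sub_neg_eq_add, ← Finset.sum_neg_distrib,
    sub_nonneg]
  convert hmono using 2 with i _ j _
  · simp only [y]
    field [hNb i]
  · rw [hinner]
    ring

theorem MatrixMonotone.dividedDifference_nonneg (hf : MatrixMonotone m f) {T : Finset ℝ}
    (hT : T.card = 2 * m) (hT0 : ∀ x ∈ T, 0 ≤ x) {q : ℝ[X]} (hq : q.degree < m) :
    0 ≤ dividedDifference T id fun x => q.eval x ^ 2 * f x := by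
  obtain ⟨a, b, hab, rfl⟩ := exists_strictlyInterlace_image_eq hT
  have hmap : Finset.univ.image (Sum.elim a b) =
      Finset.univ.map ⟨Sum.elim a b, hab.injective_sumElim⟩ := by
    rw [Finset.map_eq_image, Function.Embedding.coeFn_mk]
  rw [hmap, dividedDifference_map]
  exact hf.dividedDifference_nonneg_of_strictlyInterlace
    (fun i => hT0 _ (Finset.mem_image_of_mem _ (Finset.mem_univ (Sum.inl i)))) hab hq

-- For one more node `z` and `(x - z) q` in place of `q`, the even case bounds
-- `D(S, (x - z) q² f) = D(S, x q² f) - z D(S, q² f)` below by `0`; let `z → ∞`.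
theorem MatrixMonotone.dividedDifference_nonpos (hf : MatrixMonotone (m + 1) f) {S : Finset ℝ}
    (hS : S.card = 2 * m + 1) (hS0 : ∀ x ∈ S, 0 ≤ x) {q : ℝ[X]} (hq : q.degree < m) :
    dividedDifference S id (fun x => q.eval x ^ 2 * f x) ≤ 0 := by
  let g : ℝ → ℝ := fun x => q.eval x ^ 2 * f x
  have hlarge : ∀ᶠ z in atTop, z * dividedDifference S id g ≤
      dividedDifference S id fun x => x * g x := by
    filter_upwards [eventually_ge_atTop 0,
      (Filter.eventually_all_finset S).mpr fun x _ => eventually_ne_atTop x] with z hz hzS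
    have hdeg : ((X - C z) * q).degree < ((m + 1 : ℕ) : WithBot ℕ) := by
      rw [degree_mul, degree_X_sub_C, add_comm, Nat.cast_succ]
      exact WithBot.add_lt_add_right WithBot.one_ne_bot hq
    have h := hf.dividedDifference_nonneg (T := insert z S)
      (by rw [Finset.card_insert_of_notMem fun h => hzS z h rfl, hS]; ring)
      (by simpa [hz] using hS0) hdeg
    have hsplit : (fun x => ((X - C z) * q).eval x ^ 2 * f x) =
        fun x => (x - id z) * ((fun x => x * g x) - z • g) x := by
      ext x
      simp only [g, eval_mul, eval_sub, eval_X, eval_C, id, Pi.sub_apply, Pi.smul_apply,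
        smul_eq_mul]
      ring
    rw [hsplit, dividedDifference_insert_sub_mul (v := id) (fun h => hzS z h rfl)
      (fun x hx => (hzS x hx).symm), map_sub, map_smul] at h
    exact sub_nonneg.mp h
  by_contra! hpos
  obtain ⟨z, hle, hlt⟩ :=
    (hlarge.and ((tendsto_id.atTop_mul_const hpos).eventually_gt_atTop _)).exists
  exact hlt.not_ge hle

theorem MatrixMonotone.dividedDifference_div_nonpos (hf : MatrixMonotone (m + 1) f)
    (hf0 : 0 ≤ f 0) {T : Finset ℝ} (hT : T.card = 2 * m) (hT0 : ∀ x ∈ T, 0 < x) {q : ℝ[X]}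
    (hq : q.degree < m) :
    dividedDifference T id (fun x => q.eval x ^ 2 * f x / x) ≤ 0 := by
  have h0T : (0 : ℝ) ∉ T := fun h => (hT0 0 h).false
  have hprod : 0 ≤ ∏ x ∈ T, (id 0 - id x)⁻¹ := by
    simp only [id, zero_sub, inv_neg, Finset.prod_neg, hT, pow_mul, neg_one_sq, one_pow, one_mul]
    exact Finset.prod_nonneg fun x hx => inv_nonneg.mpr (hT0 x hx).le
  have h := hf.dividedDifference_nonpos (S := insert 0 T)
    (by rw [Finset.card_insert_of_notMem h0T, hT]) (by simpa using fun x hx => (hT0 x hx).le) hq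
  rw [dividedDifference_insert h0T] at h
  refine le_trans (le_of_eq ?_) ((le_add_of_nonneg_left
    (mul_nonneg hprod (mul_nonneg (sq_nonneg _) hf0))).trans h)
  refine congrArg _ (funext fun x => ?_)
  rw [id, sub_zero, div_eq_inv_mul]

end Loewner

section HalfLine

open Polynomial

/-- The sums of polynomials `X ^ e * q ^ 2` of degree at most `d`: over `ℝ`, the certificates of
nonnegativity on the half-line `(0,∞)`. -/
noncomputable def halfLineCone {R : Type*} [Semiring R] (d : ℕ) : AddSubmonoid R[X] :=
  AddSubmonoid.closure {p | ∃ (e : ℕ) (q : R[X]), e + 2 * q.natDegree ≤ d ∧ p = X ^ e * q ^ 2}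

lemma X_pow_mul_sq_mem_halfLineCone {R : Type*} [Semiring R] {d e : ℕ} {q : R[X]}
    (h : e + 2 * q.natDegree ≤ d) : X ^ e * q ^ 2 ∈ halfLineCone d :=
  AddSubmonoid.subset_closure ⟨e, q, h, rfl⟩

lemma sq_mem_halfLineCone {R : Type*} [Semiring R] {d : ℕ} {q : R[X]}
    (h : 2 * q.natDegree ≤ d) : q ^ 2 ∈ halfLineCone d := by
  simpa using X_pow_mul_sq_mem_halfLineCone (e := 0) (by rwa [zero_add])

open scoped Pointwise in
lemma mul_mem_halfLineCone {R : Type*} [CommSemiring R] {d e : ℕ} {p q : R[X]}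
    (hp : p ∈ halfLineCone d) (hq : q ∈ halfLineCone e) : p * q ∈ halfLineCone (d + e) := by
  have hpq := AddSubmonoid.mul_mem_mul hp hq
  rw [halfLineCone, halfLineCone, AddSubmonoid.closure_mul_closure] at hpq
  refine AddSubmonoid.closure_mono ?_ hpq
  rintro _ ⟨_, ⟨i, p, hp, rfl⟩, _, ⟨j, q, hq, rfl⟩, rfl⟩
  exact ⟨i + j, p * q, by have := natDegree_mul_le (p := p) (q := q); omega, by ring⟩

lemma eval_nonneg_of_mem_halfLineCone {R : Type*} [CommRing R] [LinearOrder R]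
    [IsStrictOrderedRing R] {d : ℕ} {p : R[X]} (hp : p ∈ halfLineCone d) {x : R} (hx : 0 ≤ x) :
    0 ≤ p.eval x := by
  refine AddSubmonoid.closure_induction ?_ (by simp)
    (fun p q _ _ hp hq => (add_nonneg hp hq).trans_eq eval_add.symm) hp
  rintro _ ⟨e, q, -, rfl⟩
  rw [eval_mul, eval_pow, eval_X, eval_pow]
  positivity

lemma C_mem_halfLineCone {c : ℝ} (hc : 0 ≤ c) (d : ℕ) : C c ∈ halfLineCone d := by
  rw [← Real.sq_sqrt hc, C_pow]
  exact sq_mem_halfLineCone (by simp)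

lemma eval_nonneg_of_eval_mul_nonneg {U : Set ℝ} (hU : IsOpen U) {F Q : ℝ[X]} (hF0 : F ≠ 0)
    (hF : ∀ x ∈ U, 0 ≤ F.eval x) (hFQ : ∀ x ∈ U, 0 ≤ (F * Q).eval x) {x : ℝ} (hx : x ∈ U) :
    0 ≤ Q.eval x := by
  have hdense : Dense (F.rootSet ℝ)ᶜ := (F.rootSet_finite ℝ).countable.dense_compl ℝ
  have hclosed : IsClosed {y | 0 ≤ Q.eval y} := isClosed_le continuous_const Q.continuous
  refine closure_minimal ?_ hclosed (hdense.open_subset_closure_inter hU hx)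
  rintro y ⟨hyU, hy⟩
  have hFy : F.eval y ≠ 0 := by simpa [mem_rootSet, hF0] using hy
  have h := hFQ y hyU
  rw [eval_mul] at h
  exact nonneg_of_mul_nonneg_right h ((hF y hyU).lt_of_ne' hFy)

lemma sq_X_sub_C_dvd_of_isLocalMin {R : ℝ[X]} {r : ℝ} (hr : R.IsRoot r)
    (hmin : IsLocalMin (fun x => R.eval x) r) : (X - C r) ^ 2 ∣ R := by
  rcases eq_or_ne R 0 with rfl | hR0
  · exact dvd_zero _
  have hderiv : R.derivative.IsRoot r := by
    rw [IsRoot, ← Polynomial.deriv]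
    exact hmin.deriv_eq_zero
  exact (le_rootMultiplicity_iff hR0).mp
    ((one_lt_rootMultiplicity_iff_isRoot hR0).mpr ⟨hr, hderiv⟩)

lemma exists_mem_halfLineCone_dvd {R : ℝ[X]} (hR : ∀ x > 0, 0 ≤ R.eval x)
    (hdeg : R.natDegree ≠ 0) :
    ∃ F ∈ halfLineCone F.natDegree, F.natDegree ≠ 0 ∧ F ∣ R := by
  obtain ⟨z, hz⟩ := Complex.exists_root (f := R.map (algebraMap ℝ ℂ))
    (by rwa [degree_map, ← natDegree_pos_iff_degree_pos, Nat.pos_iff_ne_zero])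
  rw [IsRoot, eval_map_algebraMap] at hz
  by_cases him : z.im = 0
  · have hroot : R.IsRoot z.re := by
      have hzre : z = (z.re : ℂ) := Complex.ext rfl him
      rw [hzre, ← Complex.coe_algebraMap, aeval_algebraMap_apply] at hz
      simpa using hz
    rcases le_or_gt z.re 0 with hre | hre
    · refine ⟨X - C z.re, ?_, by simp, dvd_iff_isRoot.mpr hroot⟩
      rw [sub_eq_add_neg, ← C_neg, natDegree_X_add_C]
      refine add_mem ?_ (C_mem_halfLineCone (neg_nonneg.mpr hre) 1)
      simpa using X_pow_mul_sq_mem_halfLineCone (e := 1) (q := (1 : ℝ[X])) (by simp)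
    · have hmin : IsLocalMin (fun x => R.eval x) z.re := by
        filter_upwards [lt_mem_nhds hre] with x hx
        exact hroot.symm ▸ hR x hx
      exact ⟨(X - C z.re) ^ 2, sq_mem_halfLineCone (by simp), by simp,
        sq_X_sub_C_dvd_of_isLocalMin hroot hmin⟩
  · have hsq : X ^ 2 - C (2 * z.re) * X + C (‖z‖ ^ 2) = (X - C z.re) ^ 2 + C (z.im ^ 2) := by
      rw [← Complex.normSq_eq_norm_sq, Complex.normSq_apply]
      simp only [C_add, C_mul, C_ofNat, C_pow]
      ring
    have hnat : ((X - C z.re) ^ 2 + C (z.im ^ 2)).natDegree = 2 := by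
      rw [natDegree_add_C, natDegree_pow, natDegree_X_sub_C]
    refine ⟨(X - C z.re) ^ 2 + C (z.im ^ 2), ?_, by rw [hnat]; exact two_ne_zero,
      hsq ▸ quadratic_dvd_of_aeval_eq_zero_im_ne_zero R hz him⟩
    rw [hnat]
    exact add_mem (sq_mem_halfLineCone (by simp)) (C_mem_halfLineCone (sq_nonneg _) _)

theorem mem_halfLineCone_of_eval_nonneg {R : ℝ[X]} (hR : ∀ x > 0, 0 ≤ R.eval x) :
    R ∈ halfLineCone R.natDegree := by
  induction hd : R.natDegree using Nat.strong_induction_on generalizing R with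
  | _ d ih =>
    subst hd
    rcases eq_or_ne R.natDegree 0 with h0 | h0
    · rw [eq_C_of_natDegree_eq_zero h0]
      rw [eq_C_of_natDegree_eq_zero h0] at hR
      exact C_mem_halfLineCone (by simpa using hR 1 one_pos) _
    obtain ⟨F, hF, hF0, Q, rfl⟩ := exists_mem_halfLineCone_dvd hR h0
    have hFQ : F * Q ≠ 0 := by rintro h; simp [h] at h0
    have hdeg := natDegree_mul (left_ne_zero_of_mul hFQ) (right_ne_zero_of_mul hFQ)
    have hQ : ∀ x > 0, 0 ≤ Q.eval x := fun x hx =>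
      eval_nonneg_of_eval_mul_nonneg isOpen_Ioi (left_ne_zero_of_mul hFQ)
        (fun y hy => eval_nonneg_of_mem_halfLineCone hF (le_of_lt hy)) hR hx
    rw [hdeg]
    exact mul_mem_halfLineCone hF (ih Q.natDegree (by omega) hQ rfl)

end HalfLine

section DualPositivity

open Polynomial Lagrange

variable {f : ℝ → ℝ} {m : ℕ}

lemma OperatorMonotone.dividedDifference_nonpos_of_mem_halfLineCone (hf : OperatorMonotone f)
    (hf0 : 0 ≤ f 0) {T : Finset ℝ} (hT : T.card = 2 * m) (hT0 : ∀ x ∈ T, 0 < x) {d : ℕ}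
    (hd : d < 2 * m) {R : ℝ[X]} (hR : R ∈ halfLineCone d) :
    dividedDifference T id (fun x => R.eval (-x) * f x / x) ≤ 0 := by
  refine AddSubmonoid.closure_induction ?_ ?_ (fun p q _ _ hp hq => ?_) hR
  · rintro _ ⟨e, q, he, rfl⟩
    obtain ⟨k, hk⟩ := Nat.even_or_odd' e
    let p : ℝ[X] := (X ^ k * q).comp (-X)
    have hp : p.degree < m := by
      refine degree_le_natDegree.trans_lt (Nat.cast_lt.mpr ?_)
      have hmul := natDegree_mul_le (p := X ^ k) (q := q)
      rw [natDegree_X_pow] at hmul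
      rw [natDegree_comp, natDegree_neg, natDegree_X, mul_one]
      omega
    have hpx (x : ℝ) : p.eval x = (-x) ^ k * q.eval (-x) := by simp [p]
    rcases hk with rfl | rfl
    · refine le_of_eq_of_le (dividedDifference_congr fun x _ => ?_)
        ((hf.matrixMonotone _).dividedDifference_div_nonpos hf0 hT hT0 hp)
      simp only [hpx, eval_mul, eval_pow, eval_X]
      ring
    · have h := (hf.matrixMonotone m).dividedDifference_nonneg hT (fun x hx => (hT0 x hx).le) hp
      rw [← neg_nonpos, ← map_neg] at h
      refine le_of_eq_of_le (dividedDifference_congr fun x hx => ?_) h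
      have hx0 : x ≠ 0 := (hT0 x hx).ne'
      simp only [hpx, eval_mul, eval_pow, eval_X, id, Pi.neg_apply]
      field_simp
      ring
  · simp [dividedDifference_apply]
  · have hadd : (fun x => (p + q).eval (-x) * f x / x) =
        (fun x => p.eval (-x) * f x / x) + fun x => q.eval (-x) * f x / x := by
      ext x
      simp only [eval_add, Pi.add_apply]
      ring
    rw [hadd, map_add]
    exact add_nonpos hp hq

theorem OperatorMonotone.dividedDifference_eval_mul_div_nonpos (hf : OperatorMonotone f)
    (hf0 : 0 ≤ f 0) {T : Finset ℝ} (hT : T.card = 2 * m) (hT0 : ∀ x ∈ T, 0 < x) {P : ℝ[X]}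
    (hP : ∀ s > 0, 0 ≤ P.eval (-s)) (hdeg : P.natDegree < 2 * m) :
    dividedDifference T id (fun x => P.eval x * f x / x) ≤ 0 := by
  have hcomp : P.comp (-X) ∈ halfLineCone (P.comp (-X)).natDegree :=
    mem_halfLineCone_of_eval_nonneg fun s hs => by simpa using hP s hs
  have h := hf.dividedDifference_nonpos_of_mem_halfLineCone hf0 hT hT0
    (by rwa [natDegree_comp, natDegree_neg, natDegree_X, mul_one]) hcomp
  simpa using h

-- With `w` the nodal weights, the values `-(c x * x / w x)` are interpolated by a polynomial `P`
-- such that `P (-s) = (∏ (x + s)) * ∑ c x * (x / (x + s))`, to which the previous theorem applies.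
lemma OperatorMonotone.sum_mul_nonneg_of_card_eq (hf : OperatorMonotone f) (hf0 : 0 ≤ f 0)
    (hm : 0 < m) {T : Finset (Set.Ioi (0 : ℝ))} (hT : T.card = 2 * m) {c : Set.Ioi (0 : ℝ) → ℝ}
    (hc : ∀ s > 0, 0 ≤ ∑ x ∈ T, c x * (x / (x + s))) : 0 ≤ ∑ x ∈ T, c x * f x := by
  have hinj : Set.InjOn ((↑) : Set.Ioi (0 : ℝ) → ℝ) T := Subtype.val_injective.injOn
  have hw : ∀ x ∈ T, nodalWeight T (↑) x ≠ (0 : ℝ) := fun x hx => nodalWeight_ne_zero hinj hx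
  let P : ℝ[X] := interpolate T (↑) fun x => -(c x * x / nodalWeight T (↑) x)
  have hPneg : ∀ s > 0, 0 ≤ P.eval (-s) := fun s hs => by
    have hsx (x : Set.Ioi (0 : ℝ)) : 0 < x + s := add_pos x.2 hs
    have hnegsub (x : Set.Ioi (0 : ℝ)) : -s - (x : ℝ) = -(x + s) := by ring
    have hnodal : 0 ≤ (nodal T ((↑) : Set.Ioi (0 : ℝ) → ℝ)).eval (-s) := by
      simp only [eval_nodal, hnegsub, Finset.prod_neg, hT, pow_mul, neg_one_sq, one_pow, one_mul]
      exact Finset.prod_nonneg fun x _ => (hsx x).le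
    rw [eval_interpolate_not_at_node _ fun x _ => ((neg_neg_of_pos hs).trans x.2).ne]
    refine mul_nonneg hnodal ((hc s hs).trans_eq (Finset.sum_congr rfl fun x hx => ?_))
    rw [hnegsub]
    field [hw x hx, (hsx x).ne']
  have hdeg : P.natDegree < 2 * m := by
    have hle : P.natDegree ≤ T.card - 1 := natDegree_le_of_degree_le (degree_interpolate_le _ hinj)
    omega
  have h := hf.dividedDifference_eval_mul_div_nonpos hf0 (T := T.map (.subtype _))
    (by rwa [Finset.card_map]) (by simp +contextual) hPneg hdeg
  rw [dividedDifference_map, Function.id_comp, dividedDifference_apply] at h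
  rw [← neg_nonpos, ← Finset.sum_neg_distrib]
  refine le_of_eq_of_le (Finset.sum_congr rfl fun x hx => ?_) h
  have hPx : P.eval (x : ℝ) = -(c x * x / nodalWeight T (↑) x) :=
    eval_interpolate_at_node _ hinj hx
  have hx0 : (x : ℝ) ≠ 0 := x.2.ne'
  simp only [Function.Embedding.coe_subtype, hPx]
  field [hw x hx]

theorem OperatorMonotone.sum_mul_nonneg (hf : OperatorMonotone f) (hf0 : 0 ≤ f 0)
    {T : Finset (Set.Ioi (0 : ℝ))} {c : Set.Ioi (0 : ℝ) → ℝ}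
    (hc : ∀ s > 0, 0 ≤ ∑ x ∈ T, c x * (x / (x + s))) : 0 ≤ ∑ x ∈ T, c x * f x := by
  obtain ⟨T', hTT', hcard⟩ := Infinite.exists_superset_card_eq T (2 * (T.card + 1)) (by omega)
  have hext (g : Set.Ioi (0 : ℝ) → ℝ) :
      ∑ x ∈ T', (T : Set (Set.Ioi (0 : ℝ))).indicator c x * g x = ∑ x ∈ T, c x * g x := by
    rw [← Finset.sum_subset hTT' fun x _ hx => by simp [hx]]
    exact Finset.sum_congr rfl fun x hx => by simp [hx]
  rw [← hext fun x => f x]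
  refine hf.sum_mul_nonneg_of_card_eq hf0 (Nat.succ_pos _) hcard fun s hs => ?_
  rw [hext fun x => x / (x + s)]
  exact hc s hs

end DualPositivity

section MomentProblem

open Finsupp
open scoped CompactlySupported

lemma exists_linearMap_apply_eq_nonneg {ι E : Type*} [AddCommGroup E] [Module ℝ E]
    (K : PointedCone ℝ E) {h : ι → E} {F : ι → ℝ}
    (hpos : ∀ c : ι →₀ ℝ, linearCombination ℝ h c ∈ K → 0 ≤ linearCombination ℝ F c)
    (hdom : ∀ y, ∃ c : ι →₀ ℝ, linearCombination ℝ h c + y ∈ K) :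
    ∃ Λ : E →ₗ[ℝ] ℝ, (∀ i, Λ (h i) = F i) ∧ ∀ y ∈ K, 0 ≤ Λ y := by
  obtain ⟨G, hG⟩ : ∃ G : E →ₗ[ℝ] ℝ, G ∘ₗ linearCombination ℝ h = linearCombination ℝ F := by
    change linearCombination ℝ F ∈ (linearCombination ℝ h).dualMap.range
    rw [LinearMap.range_dualMap_eq_dualAnnihilator_ker, Submodule.mem_dualAnnihilator]
    intro c hc
    rw [LinearMap.mem_ker] at hc
    refine le_antisymm ?_ (hpos c (hc ▸ K.zero_mem))
    rw [← neg_nonneg, ← map_neg]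
    exact hpos (-c) (by rw [map_neg, hc, neg_zero]; exact K.zero_mem)
  obtain ⟨Λ, hΛG, hΛ⟩ := riesz_extension K
    ⟨(linearCombination ℝ h).range, G.domRestrict (linearCombination ℝ h).range⟩
    (by
      rintro ⟨_, c, rfl⟩ hc
      exact (hpos c hc).trans_eq (DFunLike.congr_fun hG c).symm)
    (fun y => (hdom y).imp' (fun c => ⟨_, c, rfl⟩) fun _ => id)
  refine ⟨Λ, fun i => ?_, hΛ⟩
  have hi : linearCombination ℝ h (single i 1) = h i := by simp
  rw [← hi]
  refine (hΛG ⟨_, single i 1, rfl⟩).trans ((DFunLike.congr_fun hG _).trans ?_)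
  simp

theorem exists_measure_integral_eq {ι X : Type*} [TopologicalSpace X] [CompactSpace X] [T2Space X]
    [MeasurableSpace X] [BorelSpace X] {h : ι → X → ℝ} (hh : ∀ i, Continuous (h i)) {F : ι → ℝ}
    {i₀ : ι} (hi₀ : ∀ t, 0 < h i₀ t)
    (hpos : ∀ (T : Finset ι) (c : ι → ℝ),
      (∀ t, 0 ≤ ∑ i ∈ T, c i * h i t) → 0 ≤ ∑ i ∈ T, c i * F i) :
    ∃ μ : Measure X, IsFiniteMeasure μ ∧ ∀ i, ∫ t, h i t ∂μ = F i := by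
  let H : ι → C_c(X, ℝ) := fun i =>
    CompactlySupportedContinuousMap.continuousMapEquiv ⟨h i, hh i⟩
  have hH (c : ι →₀ ℝ) (t : X) : linearCombination ℝ H c t = ∑ i ∈ c.support, c i * h i t := by
    rw [linearCombination_apply, Finsupp.sum, CompactlySupportedContinuousMap.coe_sum,
      Finset.sum_apply]
    rfl
  have : PosSMulMono ℝ C_c(X, ℝ) :=
    ⟨fun r hr f g hfg t => mul_le_mul_of_nonneg_left (hfg t) hr⟩
  obtain ⟨Λ, hΛ, hΛ0⟩ := exists_linearMap_apply_eq_nonneg (PointedCone.positive ℝ C_c(X, ℝ))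
    (h := H) (F := F) (fun c hc => hpos c.support c fun t => (hc t).trans_eq (hH c t)) fun g => by
      obtain ⟨L, hL⟩ := (isCompact_range (g.continuous.div (hh i₀) fun t => (hi₀ t).ne')).bddBelow
      refine ⟨single i₀ (-L), fun t => ?_⟩
      have hLt : L * h i₀ t ≤ g t := (le_div_iff₀ (hi₀ t)).mp (hL ⟨t, rfl⟩)
      have hval : (linearCombination ℝ H (single i₀ (-L)) + g) t = -L * h i₀ t + g t := by
        rw [linearCombination_single]
        rfl
      rw [hval]
      change 0 ≤ _
      linarith
  refine ⟨RealRMK.rieszMeasure (PositiveLinearMap.mk₀ Λ hΛ0), inferInstance, fun i => ?_⟩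
  exact (RealRMK.integral_rieszMeasure _ (H i)).trans (hΛ i)

end MomentProblem

section WeightedHarmonicMean

open Filter Topology

lemma whm_of_pos {t x : ℝ} (hx : 0 < x) : whm t x = x / ((1 - t) * x + t) :=
  if_neg fun h => hx.ne' h.2

lemma one_sub_mul_add_pos {t x : ℝ} (ht : t ∈ Set.Icc (0 : ℝ) 1) (hx : 0 < x) :
    0 < (1 - t) * x + t := by
  rcases ht.1.eq_or_lt with rfl | ht0
  · simpa using hx
  · exact add_pos_of_nonneg_of_pos (mul_nonneg (sub_nonneg.mpr ht.2) hx.le) ht0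

lemma continuous_whm {x : ℝ} (hx : 0 < x) :
    Continuous fun t : Set.Icc (0 : ℝ) 1 => whm t x := by
  simp only [whm_of_pos hx]
  exact continuous_const.div (by fun_prop) fun t => (one_sub_mul_add_pos t.2 hx).ne'

lemma whm_div_one_add {s x : ℝ} (hs : 0 < s) (hx : 0 < x) :
    whm (s / (1 + s)) x = (1 + s) * (x / (x + s)) := by
  have hs1 : 1 + s ≠ 0 := (add_pos one_pos hs).ne'
  have hden : (1 - s / (1 + s)) * x + s / (1 + s) = (x + s) / (1 + s) := by
    field_simp
    ring
  rw [whm_of_pos hx, hden]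
  field_simp

lemma norm_whm_le_one {t x : ℝ} (ht : t ∈ Set.Icc (0 : ℝ) 1) (hx : x ∈ Set.Ioc (0 : ℝ) 1) :
    ‖whm t x‖ ≤ 1 := by
  have hden := one_sub_mul_add_pos ht hx.1
  rw [whm_of_pos hx.1, Real.norm_of_nonneg (div_nonneg hx.1.le hden.le), div_le_one hden]
  nlinarith [mul_nonneg ht.1 (sub_nonneg.mpr hx.2)]

lemma tendsto_whm_nhdsGT_zero (t : ℝ) : Tendsto (whm t) (𝓝[>] 0) (𝓝 (whm t 0)) := by
  rcases eq_or_ne t 0 with rfl | ht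
  · rw [show whm 0 0 = 1 by simp [whm]]
    refine tendsto_const_nhds.congr' ?_
    filter_upwards [self_mem_nhdsWithin] with x (hx : 0 < x)
    rw [whm_of_pos hx, sub_zero, one_mul, add_zero, div_self hx.ne']
  · have hwhm : whm t = fun x => x / ((1 - t) * x + t) :=
      funext fun x => if_neg fun h => ht h.1
    rw [hwhm]
    refine (ContinuousAt.div ?_ ?_ ?_).continuousWithinAt <;> first | fun_prop | simpa using ht

lemma tendsto_integral_whm_nhdsGT_zero (μ : Measure (Set.Icc (0 : ℝ) 1)) [IsFiniteMeasure μ] :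
    Tendsto (fun x => ∫ t, whm (t : ℝ) x ∂μ) (𝓝[>] 0) (𝓝 (∫ t, whm (t : ℝ) 0 ∂μ)) := by
  refine tendsto_integral_filter_of_dominated_convergence (fun _ => 1) ?_ ?_
    (integrable_const _) (Eventually.of_forall fun t => tendsto_whm_nhdsGT_zero t)
  · filter_upwards [self_mem_nhdsWithin] with x hx
    exact (continuous_whm hx).aestronglyMeasurable
  · filter_upwards [Ioc_mem_nhdsGT one_pos] with x hx
    exact Eventually.of_forall fun t => norm_whm_le_one t.2 hx

theorem OperatorMonotone.exists_measure_integral_whm_eq {f : ℝ → ℝ} (hf : OperatorMonotone f)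
    (hf0 : 0 ≤ f 0) : ∃ μ : Measure (Set.Icc (0 : ℝ) 1), IsFiniteMeasure μ ∧
      ∀ x > 0, ∫ t : Set.Icc (0 : ℝ) 1, whm (t : ℝ) x ∂μ = f x := by
  have hpos : ∀ (T : Finset (Set.Ioi (0 : ℝ))) (c : Set.Ioi (0 : ℝ) → ℝ),
      (∀ t : Set.Icc (0 : ℝ) 1, 0 ≤ ∑ x ∈ T, c x * whm t x) → 0 ≤ ∑ x ∈ T, c x * f x := by
    refine fun T c hc => hf.sum_mul_nonneg hf0 fun s hs => ?_
    have hs1 : 0 < 1 + s := add_pos one_pos hs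
    have h := hc ⟨s / (1 + s), div_nonneg hs.le hs1.le, div_le_one_of_le₀ (by linarith) hs1.le⟩
    have hscale (x : Set.Ioi (0 : ℝ)) :
        c x * whm (s / (1 + s)) x = (1 + s) * (c x * (x / (x + s))) := by
      rw [whm_div_one_add hs x.2]
      ring
    simp only [hscale, ← Finset.mul_sum] at h
    exact nonneg_of_mul_nonneg_right h hs1
  obtain ⟨μ, hμ, h⟩ := exists_measure_integral_eq (F := fun x : Set.Ioi (0 : ℝ) => f x)
    (fun x : Set.Ioi (0 : ℝ) => continuous_whm x.2) (i₀ := ⟨1, Set.mem_Ioi.mpr one_pos⟩)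
    (fun t => by simp [whm_of_pos one_pos]) hpos
  exact ⟨μ, hμ, fun x hx => h ⟨x, hx⟩⟩

end WeightedHarmonicMean

theorem stmt2 (f : ℝ → ℝ) (hc : ContinuousOn f (Set.Ici 0))
    (hnn : ∀ x : ℝ, 0 ≤ x → 0 ≤ f x) (hm : OperatorMonotone f) :
    ∃ μ : Measure (Set.Icc (0 : ℝ) 1), IsFiniteMeasure μ ∧
      ∀ x : ℝ, 0 ≤ x → f x = ∫ t : Set.Icc (0 : ℝ) 1, whm (t : ℝ) x ∂μ := by
  obtain ⟨μ, hμ, hμf⟩ := hm.exists_measure_integral_whm_eq (hnn 0 le_rfl)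
  refine ⟨μ, hμ, fun x hx => ?_⟩
  rcases hx.eq_or_lt with rfl | hx
  · have hf : Filter.Tendsto f (nhdsWithin 0 (Set.Ioi 0)) (nhds (f 0)) :=
      (hc 0 Set.self_mem_Ici).mono_left (nhdsWithin_mono 0 Set.Ioi_subset_Ici_self)
    refine tendsto_nhds_unique hf ((tendsto_integral_whm_nhdsGT_zero μ).congr' ?_)
    filter_upwards [self_mem_nhdsWithin] with x hx using hμf x hx
  · exact (hμf x hx).symm
end

section
/- Let f : [0,∞) → [0,∞) be a continuous operator monotone function. Then there exists a continuous operator monotone function g : [0,∞) → [0,∞) such that g(x) = x·f(1/x) for all x ∈ (0,∞). -/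
open MeasureTheory Real ComplexOrder

/-!
For positive definite `A ≤ B` the matrix `K = A^{1/2} B^{-1/2}` is a contraction with
`Kᴴ A⁻¹ K = B⁻¹`, so Hansen's inequality `Kᴴ f(X) K ≤ f(Kᴴ X K)` at `X = A⁻¹`, conjugated by
`B^{1/2}`, reads `A^{1/2} f(A⁻¹) A^{1/2} ≤ B^{1/2} f(B⁻¹) B^{1/2}`: the function `x f(1/x)` is
operator monotone on `(0, ∞)`. It is continuous there because it increases while its quotient
by `x`, which is `f(1/x)`, decreases; letting `x → 0⁺` extends it to `[0, ∞)`.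

For Hansen's inequality, dilate the contraction `K` to an isometry `V`. The projection `V Vᴴ` almost
reduces `X`: `X ≤ V ((1 + δ) Vᴴ X V) Vᴴ + c (1 - V Vᴴ)` for every `δ > 0` and some `c`, which gives
the inequality with `1 + δ` inserted on the right. Applied to `K / √(1 + δ)`, this moves the factor
outside `f`, where it tends to `1` whether or not `f` is continuous.
-/

section

open Set Filter Topology Matrix
open scoped MatrixOrder Matrix.Norms.L2Operator

section StarOrdered

theorem star_add_mul_mul_add_le {R : Type*} [Ring R] [PartialOrder R] [StarRing R]
    [StarOrderedRing R] [Algebra ℝ R] [StarModule ℝ R] [IsOrderedModule ℝ R]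
    {x : R} (hx : 0 ≤ x) (a b : R) {δ : ℝ} (hδ : 0 < δ) :
    star (a + b) * x * (a + b) ≤
      (1 + δ) • (star a * x * a) + (1 + δ⁻¹) • (star b * x * b) := by
  have hsquare : 0 ≤ δ⁻¹ • (star (δ • a - b) * x * (δ • a - b)) :=
    smul_nonneg (inv_nonneg.2 hδ.le) (star_left_conjugate_nonneg hx _)
  rw [← sub_nonneg]
  convert hsquare using 1
  simp only [star_add, star_sub, star_smul, star_trivial, add_mul, mul_add, sub_mul, mul_sub,
    smul_mul_assoc, mul_smul_comm, smul_sub, smul_smul, add_smul, one_smul,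
    mul_assoc, inv_mul_cancel_left₀ hδ.ne', inv_mul_cancel₀ hδ.ne']
  abel

theorem continuousOn_cfc_of_continuousOn_Ici {𝔸 : Type*} [CStarAlgebra 𝔸] {f : ℝ → ℝ} {c : ℝ}
    (hf : ContinuousOn f (Ici c)) :
    ContinuousOn (fun a : 𝔸 => cfc f a) {a | IsSelfAdjoint a ∧ spectrum ℝ a ⊆ Ici c} := by
  have hcont : Continuous fun x => f (max c x) :=
    hf.comp_continuous (by fun_prop) fun x => le_max_left c x
  have hcfc : ContinuousOn (fun a : 𝔸 => cfc (fun x => f (max c x)) a)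
      {a | IsSelfAdjoint a ∧ spectrum ℝ a ⊆ Ici c} :=
    ContinuousOn.cfc_of_mem_nhdsSet (s := univ) _ univ_mem continuousOn_id (fun a ha => ha.1)
      hcont.continuousOn
  refine hcfc.congr fun a ha => cfc_congr fun x hx => ?_
  simp only [max_eq_right (mem_Ici.1 (ha.2 hx))]

end StarOrdered

section Intertwining

variable {𝕜 m n : Type*} [RCLike 𝕜] [Fintype m] [DecidableEq m] [Fintype n] [DecidableEq n]

theorem aeval_mul_eq_mul_aeval {A : Matrix m m 𝕜} {B : Matrix n n 𝕜} {W : Matrix m n 𝕜}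
    (h : A * W = W * B) (p : Polynomial ℝ) :
    Polynomial.aeval A p * W = W * Polynomial.aeval B p := by
  induction p using Polynomial.induction_on with
  | C r => simp only [Polynomial.aeval_C, Algebra.algebraMap_eq_smul_one, Matrix.smul_mul,
      Matrix.mul_smul, Matrix.one_mul, Matrix.mul_one]
  | add p q hp hq => rw [map_add, map_add, Matrix.add_mul, Matrix.mul_add, hp, hq]
  | monomial k r ih =>
    rw [pow_succ, ← mul_assoc, map_mul, map_mul (Polynomial.aeval B), Polynomial.aeval_X,
      Polynomial.aeval_X, Matrix.mul_assoc, h, ← Matrix.mul_assoc, ih, Matrix.mul_assoc]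

theorem exists_cfc_eq_aeval (f : ℝ → ℝ) {A : Matrix m m 𝕜} {B : Matrix n n 𝕜}
    (hA : IsSelfAdjoint A) (hB : IsSelfAdjoint B) :
    ∃ p : Polynomial ℝ, cfc f A = Polynomial.aeval A p ∧ cfc f B = Polynomial.aeval B p := by
  have hfin : (spectrum ℝ A ∪ spectrum ℝ B).Finite :=
    finite_real_spectrum.union finite_real_spectrum
  refine ⟨Lagrange.interpolate hfin.toFinset id f, ?_⟩
  have hp {x : ℝ} (hx : x ∈ spectrum ℝ A ∪ spectrum ℝ B) :
      f x = (Lagrange.interpolate hfin.toFinset id f).eval x :=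
    (Lagrange.eval_interpolate_at_node f (injOn_id _) (hfin.mem_toFinset.2 hx)).symm
  rw [← cfc_polynomial _ A, ← cfc_polynomial _ B]
  exact ⟨cfc_congr fun x hx => hp (.inl hx), cfc_congr fun x hx => hp (.inr hx)⟩

theorem cfc_mul_eq_mul_cfc (f : ℝ → ℝ) {A : Matrix m m 𝕜} {B : Matrix n n 𝕜} {W : Matrix m n 𝕜}
    (hA : IsSelfAdjoint A) (hB : IsSelfAdjoint B) (h : A * W = W * B) :
    cfc f A * W = W * cfc f B := by
  obtain ⟨p, hpA, hpB⟩ := exists_cfc_eq_aeval f hA hB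
  rw [hpA, hpB, aeval_mul_eq_mul_aeval h]

theorem cfc_submatrix_equiv (f : ℝ → ℝ) {A : Matrix m m 𝕜} (hA : IsSelfAdjoint A) (e : n ≃ m) :
    cfc f (A.submatrix e e) = (cfc f A).submatrix e e := by
  have h : A.submatrix e e * (1 : Matrix m m 𝕜).submatrix e (Equiv.refl m) =
      (1 : Matrix m m 𝕜).submatrix e (Equiv.refl m) * A := by
    rw [mul_submatrix_one, one_submatrix_mul, submatrix_submatrix]
    simp
  have hcfc := cfc_mul_eq_mul_cfc f (IsHermitian.submatrix hA e) hA h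
  simp only [mul_submatrix_one, one_submatrix_mul] at hcfc
  simpa using congrArg (fun M => M.submatrix id e) hcfc

theorem cfc_fromBlocks_diagonal (f : ℝ → ℝ) {A : Matrix m m 𝕜} {B : Matrix n n 𝕜}
    (hA : IsSelfAdjoint A) (hB : IsSelfAdjoint B) :
    cfc f (fromBlocks A 0 0 B) = fromBlocks (cfc f A) 0 0 (cfc f B) := by
  have hAB : IsSelfAdjoint (fromBlocks A 0 0 B) := IsHermitian.fromBlocks hA conjTranspose_zero hB
  have hl : cfc f (fromBlocks A 0 0 B) * fromRows (1 : Matrix m m 𝕜) (0 : Matrix n m 𝕜) =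
      fromRows (1 : Matrix m m 𝕜) (0 : Matrix n m 𝕜) * cfc f A :=
    cfc_mul_eq_mul_cfc f hAB hA <| by simp [fromBlocks_mul_fromRows, fromRows_mul]
  have hr : cfc f (fromBlocks A 0 0 B) * fromRows (0 : Matrix m n 𝕜) (1 : Matrix n n 𝕜) =
      fromRows (0 : Matrix m n 𝕜) (1 : Matrix n n 𝕜) * cfc f B :=
    cfc_mul_eq_mul_cfc f hAB hB <| by simp [fromBlocks_mul_fromRows, fromRows_mul]
  calc cfc f (fromBlocks A 0 0 B)
      = cfc f (fromBlocks A 0 0 B) * fromCols (fromRows 1 0) (fromRows 0 1) := by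
        rw [fromCols_fromRows_eq_fromBlocks, fromBlocks_one, Matrix.mul_one]
    _ = fromBlocks (cfc f A) 0 0 (cfc f B) := by
        rw [mul_fromCols, hl, hr, fromRows_mul, fromRows_mul, fromCols_fromRows_eq_fromBlocks]
        simp only [Matrix.one_mul, Matrix.zero_mul]

end Intertwining

/-- `f` is operator monotone on a set `s` of real numbers: on the Hermitian complex matrices of any
given size with spectrum in `s`, the functional calculus of `f` is monotone for the Loewner
order. -/
def OperatorMonotoneOn (f : ℝ → ℝ) (s : Set ℝ) : Prop :=
  ∀ n : ℕ, MonotoneOn (fun A : Matrix (Fin n) (Fin n) ℂ => cfc f A)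
    {A | IsSelfAdjoint A ∧ spectrum ℝ A ⊆ s}

theorem isSelfAdjoint_and_spectrum_subset_Ici_zero_iff {𝔸 : Type*} [CStarAlgebra 𝔸]
    [PartialOrder 𝔸] [StarOrderedRing 𝔸] {a : 𝔸} :
    IsSelfAdjoint a ∧ spectrum ℝ a ⊆ Ici 0 ↔ 0 ≤ a :=
  ⟨fun h => (StarOrderedRing.nonneg_iff_spectrum_nonneg a h.1).2 fun _ hx => h.2 hx,
    fun h => ⟨.of_nonneg h, fun _ hx => spectrum_nonneg_of_nonneg h hx⟩⟩

theorem isSelfAdjoint_and_spectrum_subset_Ioi_zero_iff {𝔸 : Type*} [CStarAlgebra 𝔸]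
    [PartialOrder 𝔸] [StarOrderedRing 𝔸] {a : 𝔸} :
    IsSelfAdjoint a ∧ spectrum ℝ a ⊆ Ioi 0 ↔ IsStrictlyPositive a :=
  ⟨fun h => (StarOrderedRing.isStrictlyPositive_iff_spectrum_pos a h.1).2 fun _ hx => h.2 hx,
    fun h => ⟨.of_nonneg h.nonneg, fun _ hx => h.spectrum_pos hx⟩⟩

theorem operatorMonotoneOn_Ici_zero_iff {f : ℝ → ℝ} :
    OperatorMonotoneOn f (Ici 0) ↔ OperatorMonotone f := by
  simp only [OperatorMonotoneOn, OperatorMonotone, MonotoneOn, mem_ofPred_eq,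
    isSelfAdjoint_and_spectrum_subset_Ici_zero_iff, ← nonneg_iff_posSemidef, sub_nonneg]
  exact ⟨fun h n A B hA hB hAB => h n hA hB hAB, fun h n A hA B hB hAB => h n A B hA hB hAB⟩

namespace OperatorMonotoneOn

variable {f g : ℝ → ℝ} {s : Set ℝ}

theorem congr (hf : OperatorMonotoneOn f s) (hfg : EqOn f g s) : OperatorMonotoneOn g s :=
  fun n => (hf n).congr fun _ hA => cfc_congr (hfg.mono hA.2)

theorem cfc_le_cfc {n : Type*} [Fintype n] [DecidableEq n] (hf : OperatorMonotoneOn f s)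
    {A B : Matrix n n ℂ} (hA : IsSelfAdjoint A) (hAs : spectrum ℝ A ⊆ s)
    (hB : IsSelfAdjoint B) (hBs : spectrum ℝ B ⊆ s) (hAB : A ≤ B) : cfc f A ≤ cfc f B := by
  let e : Fin (Fintype.card n) ≃ n := (Fintype.equivFin n).symm
  have hspec (M : Matrix n n ℂ) : spectrum ℝ (M.submatrix e e) = spectrum ℝ M :=
    AlgEquiv.spectrum_eq (reindexAlgEquiv ℝ ℂ e.symm) M
  have h : cfc f (A.submatrix e e) ≤ cfc f (B.submatrix e e) :=
    hf _ ⟨IsHermitian.submatrix hA e, (hspec A).trans_subset hAs⟩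
      ⟨IsHermitian.submatrix hB e, (hspec B).trans_subset hBs⟩ (PosSemidef.submatrix hAB e)
  rw [cfc_submatrix_equiv f hA, cfc_submatrix_equiv f hB] at h
  exact (posSemidef_submatrix_equiv e).1 h

theorem monotoneOn (hf : OperatorMonotoneOn f s) : MonotoneOn f s := by
  intro x hx y hy hxy
  have hmem {r : ℝ} (hr : r ∈ s) : IsSelfAdjoint (algebraMap ℝ (Matrix (Fin 1) (Fin 1) ℂ) r) ∧
      spectrum ℝ (algebraMap ℝ (Matrix (Fin 1) (Fin 1) ℂ) r) ⊆ s :=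
    ⟨.algebraMap _ (.all r), by simpa using hr⟩
  have h := hf 1 (hmem hx) (hmem hy) (algebraMap_mono _ hxy)
  simpa only [cfc_algebraMap, algebraMap_le_algebraMap] using h

theorem Ici_of_Ioi {a : ℝ} (hf : OperatorMonotoneOn f (Ioi a)) (hc : ContinuousOn f (Ici a)) :
    OperatorMonotoneOn f (Ici a) := by
  intro n A hA B hB hAB
  have hshift {M : Matrix (Fin n) (Fin n) ℂ} (hM : IsSelfAdjoint M ∧ spectrum ℝ M ⊆ Ici a)
      {δ : ℝ} (hδ : 0 < δ) : IsSelfAdjoint (M + algebraMap ℝ _ δ) ∧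
        spectrum ℝ (M + algebraMap ℝ _ δ) ⊆ Ioi a := by
    refine ⟨hM.1.add (.algebraMap _ (.all δ)), ?_⟩
    rw [← spectrum.add_singleton_eq]
    rintro _ ⟨x, hx, _, rfl, rfl⟩
    exact lt_add_of_le_of_pos (hM.2 hx) hδ
  have hlim {M : Matrix (Fin n) (Fin n) ℂ} (hM : IsSelfAdjoint M ∧ spectrum ℝ M ⊆ Ici a) :
      Tendsto (fun δ : ℝ => cfc f (M + algebraMap ℝ _ δ)) (𝓝[>] 0) (𝓝 (cfc f M)) := by
    refine (continuousOn_cfc_of_continuousOn_Ici hc M hM).tendsto.comp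
      (tendsto_nhdsWithin_iff.2 ⟨?_, ?_⟩)
    · exact (Continuous.tendsto' (by fun_prop) 0 M (by simp)).mono_left nhdsWithin_le_nhds
    · filter_upwards [self_mem_nhdsWithin] with δ hδ
      exact ⟨(hshift hM hδ).1, (hshift hM hδ).2.trans Ioi_subset_Ici_self⟩
  refine le_of_tendsto_of_tendsto (hlim hA) (hlim hB) ?_
  filter_upwards [self_mem_nhdsWithin] with δ hδ
  exact hf n (hshift hA hδ) (hshift hB hδ) (add_le_add_left hAB _)

end OperatorMonotoneOn

section Hansen

theorem conjTranspose_mul_mul_le_conjTranspose_mul_mul {𝕜 m n : Type*} [RCLike 𝕜] [Fintype m]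
    [Finite n] {A B : Matrix m m 𝕜} (h : A ≤ B) (K : Matrix m n 𝕜) :
    Kᴴ * A * K ≤ Kᴴ * B * K := by
  rw [le_iff, ← Matrix.sub_mul, ← Matrix.mul_sub]
  exact PosSemidef.conjTranspose_mul_mul_same h K

variable {f : ℝ → ℝ} {m n : Type*} [Fintype m] [DecidableEq m] [Fintype n] [DecidableEq n]

theorem le_isometry_compression_add {X : Matrix m m ℂ} (hX : 0 ≤ X) {V : Matrix m n ℂ}
    (hV : Vᴴ * V = 1) {δ : ℝ} (hδ : 0 < δ) :
    X ≤ V * ((1 + δ) • (Vᴴ * X * V)) * Vᴴ + ((1 + δ⁻¹) * ‖X‖) • (1 - V * Vᴴ) := by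
  set P := V * Vᴴ with hP
  have hPs : Pᴴ = P := by rw [hP, conjTranspose_mul, conjTranspose_conjTranspose]
  have hPP : P * P = P := by
    rw [hP, Matrix.mul_assoc, ← Matrix.mul_assoc Vᴴ, hV, Matrix.one_mul]
  have hQ : star (1 - P) * X * (1 - P) ≤ ‖X‖ • (1 - P) := by
    have hQQ : star (1 - P) * (1 - P) = 1 - P := by
      rw [star_sub, star_one, star_eq_conjTranspose, hPs]
      exact (show IsIdempotentElem P from hPP).one_sub.eq
    simpa only [hQQ] using
      CStarAlgebra.star_left_conjugate_le_norm_smul (a := 1 - P) (.of_nonneg hX)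
  calc X = star (P + (1 - P)) * X * (P + (1 - P)) := by simp
    _ ≤ (1 + δ) • (star P * X * P) + (1 + δ⁻¹) • (star (1 - P) * X * (1 - P)) :=
      star_add_mul_mul_add_le hX P (1 - P) hδ
    _ ≤ (1 + δ) • (star P * X * P) + (1 + δ⁻¹) • (‖X‖ • (1 - P)) := by gcongr
    _ = V * ((1 + δ) • (Vᴴ * X * V)) * Vᴴ + ((1 + δ⁻¹) * ‖X‖) • (1 - P) := by
      rw [smul_smul, star_eq_conjTranspose, hPs, hP]
      simp only [Matrix.mul_smul, Matrix.smul_mul, Matrix.mul_assoc]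

namespace OperatorMonotoneOn

variable {X : Matrix m m ℂ}

theorem isometry_compression_le (hf : OperatorMonotoneOn f (Ici 0)) (hX : 0 ≤ X)
    {V : Matrix m n ℂ} (hV : Vᴴ * V = 1) {δ : ℝ} (hδ : 0 < δ) :
    Vᴴ * cfc f X * V ≤ cfc f ((1 + δ) • (Vᴴ * X * V)) := by
  have hY : 0 ≤ (1 + δ) • (Vᴴ * X * V) :=
    smul_nonneg (by positivity) (PosSemidef.conjTranspose_mul_mul_same hX.posSemidef V).nonneg
  have hXM := le_isometry_compression_add hX hV hδ
  set Y := (1 + δ) • (Vᴴ * X * V)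
  set M := V * Y * Vᴴ + ((1 + δ⁻¹) * ‖X‖) • (1 - V * Vᴴ)
  have hM : 0 ≤ M := hX.trans hXM
  have hMV : M * V = V * Y := by
    simp only [M, Matrix.add_mul, Matrix.smul_mul, Matrix.sub_mul, Matrix.mul_assoc, hV,
      Matrix.mul_one, Matrix.one_mul, sub_self, smul_zero, add_zero]
  obtain ⟨hXs, hXσ⟩ := isSelfAdjoint_and_spectrum_subset_Ici_zero_iff.2 hX
  obtain ⟨hMs, hMσ⟩ := isSelfAdjoint_and_spectrum_subset_Ici_zero_iff.2 hM
  calc Vᴴ * cfc f X * V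
      ≤ Vᴴ * cfc f M * V :=
        conjTranspose_mul_mul_le_conjTranspose_mul_mul (hf.cfc_le_cfc hXs hXσ hMs hMσ hXM) V
    _ = cfc f Y := by
        rw [Matrix.mul_assoc, cfc_mul_eq_mul_cfc f hMs (.of_nonneg hY) hMV, ← Matrix.mul_assoc, hV,
          Matrix.one_mul]

theorem contraction_compression_le (hf : OperatorMonotoneOn f (Ici 0)) (h0 : 0 ≤ f 0) (hX : 0 ≤ X)
    {K : Matrix m n ℂ} (hK : Kᴴ * K ≤ 1) {δ : ℝ} (hδ : 0 < δ) :
    Kᴴ * cfc f X * K ≤ cfc f ((1 + δ) • (Kᴴ * X * K)) := by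
  set D := CFC.sqrt (1 - Kᴴ * K)
  have hD : Dᴴ = D := (IsSelfAdjoint.of_nonneg (CFC.sqrt_nonneg _)).star_eq
  have hDD : D * D = 1 - Kᴴ * K := CFC.sqrt_mul_sqrt_self _ (sub_nonneg.2 hK)
  have hV : (fromRows K D)ᴴ * fromRows K D = 1 := by
    rw [conjTranspose_fromRows_eq_fromCols_conjTranspose, fromCols_mul_fromRows, hD, hDD,
      add_sub_cancel]
  have hcompress (M : Matrix m m ℂ) (N : Matrix n n ℂ) :
      (fromRows K D)ᴴ * fromBlocks M 0 0 N * fromRows K D = Kᴴ * M * K + D * N * D := by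
    rw [conjTranspose_fromRows_eq_fromCols_conjTranspose, fromCols_mul_fromBlocks,
      fromCols_mul_fromRows, hD]
    simp
  set X' : Matrix (m ⊕ n) (m ⊕ n) ℂ := fromBlocks X 0 0 0
  have hX' : 0 ≤ X' := by
    have h := hX.posSemidef.conjTranspose_mul_mul_same
      (fromCols (1 : Matrix m m ℂ) (0 : Matrix m n ℂ))
    rw [conjTranspose_fromCols_eq_fromRows_conjTranspose, fromRows_mul, fromRows_mul_fromCols] at h
    simpa [X'] using h.nonneg
  calc Kᴴ * cfc f X * K
      ≤ Kᴴ * cfc f X * K + f 0 • (D * D) := by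
        rw [hDD]
        exact le_add_of_nonneg_right (smul_nonneg h0 (sub_nonneg.2 hK))
    _ = (fromRows K D)ᴴ * cfc f X' * fromRows K D := by
        rw [cfc_fromBlocks_diagonal f (.of_nonneg hX) (.zero _), hcompress, cfc_apply_zero]
        simp only [Algebra.algebraMap_eq_smul_one, Matrix.mul_smul, Matrix.smul_mul, Matrix.mul_one]
    _ ≤ cfc f ((1 + δ) • ((fromRows K D)ᴴ * X' * fromRows K D)) :=
        hf.isometry_compression_le hX' hV hδ
    _ = cfc f ((1 + δ) • (Kᴴ * X * K)) := by
        rw [hcompress, Matrix.mul_zero, Matrix.zero_mul, add_zero]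

theorem hansen_inequality (hf : OperatorMonotoneOn f (Ici 0)) (h0 : 0 ≤ f 0) (hX : 0 ≤ X)
    {K : Matrix m n ℂ} (hK : Kᴴ * K ≤ 1) :
    Kᴴ * cfc f X * K ≤ cfc f (Kᴴ * X * K) := by
  have hscaled : ∀ᶠ t : ℝ in 𝓝[<] 1, t • (Kᴴ * cfc f X * K) ≤ cfc f (Kᴴ * X * K) := by
    filter_upwards [Ioo_mem_nhdsLT zero_lt_one] with t ⟨ht0, ht1⟩
    have hconj (M : Matrix m m ℂ) : (√t • K)ᴴ * M * (√t • K) = t • (Kᴴ * M * K) := by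
      simp [smul_smul, Real.mul_self_sqrt ht0.le]
    have hK' : (√t • K)ᴴ * (√t • K) ≤ 1 := by
      rw [← Matrix.mul_one (√t • K)ᴴ, hconj, Matrix.mul_one]
      exact (smul_le_of_le_one_left (posSemidef_conjTranspose_mul_self K).nonneg ht1.le).trans hK
    have h := hf.contraction_compression_le h0 hX hK' (sub_pos.2 (one_lt_inv₀ ht0 |>.2 ht1))
    rwa [hconj, hconj, smul_smul, add_sub_cancel, inv_mul_cancel₀ ht0.ne', one_smul] at h
  have hlim : Tendsto (fun t : ℝ => t • (Kᴴ * cfc f X * K)) (𝓝[<] 1) (𝓝 (Kᴴ * cfc f X * K)) :=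
    ((continuous_id.smul continuous_const).tendsto' 1 _ (one_smul ℝ _)).mono_left
      nhdsWithin_le_nhds
  exact le_of_tendsto hlim hscaled

end OperatorMonotoneOn

end Hansen

section Transpose

variable {𝔸 : Type*} [CStarAlgebra 𝔸] [PartialOrder 𝔸] [StarOrderedRing 𝔸] {a b : 𝔸}

theorem star_rpow (a : 𝔸) (r : ℝ) : star (a ^ r) = a ^ r :=
  (IsSelfAdjoint.of_nonneg CFC.rpow_nonneg).star_eq

theorem star_mul_self_rpow_half_mul_rpow_neg_half_le_one (ha : 0 ≤ a) (hb : IsStrictlyPositive b)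
    (hab : a ≤ b) :
    star (a ^ (1 / 2 : ℝ) * b ^ (-(1 / 2) : ℝ)) * (a ^ (1 / 2 : ℝ) * b ^ (-(1 / 2) : ℝ)) ≤ 1 := by
  rw [← CStarAlgebra.norm_le_one_iff_of_nonneg _ (star_mul_self_nonneg _),
    CStarRing.norm_star_mul_self, ← sq, sq_le_one_iff₀ (norm_nonneg _), ← CFC.sqrt_eq_rpow]
  exact (le_iff_norm_sqrt_mul_rpow a b).1 hab

theorem star_mul_rpow_neg_one_mul_eq_rpow_neg_one (ha : IsStrictlyPositive a)
    (hb : IsStrictlyPositive b) :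
    star (a ^ (1 / 2 : ℝ) * b ^ (-(1 / 2) : ℝ)) * a ^ (-1 : ℝ) *
      (a ^ (1 / 2 : ℝ) * b ^ (-(1 / 2) : ℝ)) = b ^ (-1 : ℝ) := by
  have hconj : a ^ (1 / 2 : ℝ) * a ^ (-1 : ℝ) * a ^ (1 / 2 : ℝ) = 1 := by
    rw [← CFC.rpow_add ha.isUnit, ← CFC.rpow_add ha.isUnit]
    norm_num [CFC.rpow_zero a]
  calc star (a ^ (1 / 2 : ℝ) * b ^ (-(1 / 2) : ℝ)) * a ^ (-1 : ℝ) *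
        (a ^ (1 / 2 : ℝ) * b ^ (-(1 / 2) : ℝ))
      = b ^ (-(1 / 2) : ℝ) * (a ^ (1 / 2 : ℝ) * a ^ (-1 : ℝ) * a ^ (1 / 2 : ℝ)) *
          b ^ (-(1 / 2) : ℝ) := by
        rw [star_mul, star_rpow, star_rpow]
        simp only [mul_assoc]
    _ = b ^ (-1 : ℝ) := by
        rw [hconj, mul_one, ← CFC.rpow_add hb.isUnit]
        norm_num

theorem cfc_mul_comp_inv {f : ℝ → ℝ} (ha : IsStrictlyPositive a)
    (hf : ContinuousOn f ((·⁻¹) '' spectrum ℝ a)) :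
    cfc (fun x => x * f x⁻¹) a =
      a ^ (1 / 2 : ℝ) * cfc f (a ^ (-1 : ℝ)) * a ^ (1 / 2 : ℝ) := by
  have hpos {x : ℝ} (hx : x ∈ spectrum ℝ a) : 0 < x := ha.spectrum_pos hx
  have hinv : ContinuousOn (fun x : ℝ => x⁻¹) (spectrum ℝ a) :=
    continuousOn_inv₀.mono fun x hx => (hpos hx).ne'
  have hfinv : ContinuousOn (fun x => f x⁻¹) (spectrum ℝ a) :=
    hf.comp hinv (mapsTo_image _ _)
  have hsqrt : ContinuousOn (fun x : ℝ => x ^ (1 / 2 : ℝ)) (spectrum ℝ a) :=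
    (Real.continuous_rpow_const (by norm_num)).continuousOn
  have hcomp : cfc f (a ^ (-1 : ℝ)) = cfc (fun x => f x⁻¹) a := by
    rw [CFC.rpow_eq_cfc_real ha.nonneg,
      cfc_congr (g := fun x => x⁻¹) fun x _ => Real.rpow_neg_one x, ← cfc_comp f (fun x => x⁻¹) a]
    rfl
  rw [hcomp, CFC.rpow_eq_cfc_real ha.nonneg, ← cfc_mul _ _ a hsqrt hfinv,
    ← cfc_mul (fun x => x ^ (1 / 2 : ℝ) * f x⁻¹) _ a (hsqrt.mul hfinv) hsqrt]
  refine cfc_congr fun x hx => ?_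
  have hxx : x ^ (1 / 2 : ℝ) * x ^ (1 / 2 : ℝ) = x := by
    rw [← Real.rpow_add (hpos hx), add_halves, Real.rpow_one]
  linear_combination -f x⁻¹ * hxx

theorem OperatorMonotoneOn.mul_comp_inv {f : ℝ → ℝ} (hf : OperatorMonotoneOn f (Ici 0))
    (h0 : 0 ≤ f 0) : OperatorMonotoneOn (fun x => x * f x⁻¹) (Ioi 0) := by
  intro n A hA B hB hAB
  rw [mem_ofPred_eq, isSelfAdjoint_and_spectrum_subset_Ioi_zero_iff] at hA hB
  have hcfc {M : Matrix (Fin n) (Fin n) ℂ} (hM : IsStrictlyPositive M) :=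
    cfc_mul_comp_inv hM ((finite_real_spectrum.image _).continuousOn f)
  set S := B ^ (1 / 2 : ℝ)
  set T := B ^ (-(1 / 2) : ℝ)
  have hST : S * T = 1 := CFC.rpow_mul_rpow_neg (1 / 2)
  have hTS : T * S = 1 := CFC.rpow_neg_mul_rpow (1 / 2)
  have hK := star_mul_self_rpow_half_mul_rpow_neg_half_le_one hA.nonneg hB hAB
  have hKA := star_mul_rpow_neg_one_mul_eq_rpow_neg_one hA hB
  set K := A ^ (1 / 2 : ℝ) * T with hK_def
  have hansen : star K * cfc f (A ^ (-1 : ℝ)) * K ≤ cfc f (B ^ (-1 : ℝ)) := by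
    rw [← hKA]
    exact hf.hansen_inequality h0 (X := A ^ (-1 : ℝ)) (CFC.rpow_nonneg (a := A)) hK
  have hSK : S * star K = A ^ (1 / 2 : ℝ) := by
    rw [hK_def, star_mul, star_rpow, star_rpow, ← mul_assoc, hST, one_mul]
  have hKS : K * S = A ^ (1 / 2 : ℝ) := by rw [hK_def, mul_assoc, hTS, mul_one]
  calc cfc (fun x => x * f x⁻¹) A
      = S * star K * cfc f (A ^ (-1 : ℝ)) * (K * S) := by rw [hcfc hA, hSK, hKS]
    _ = S * (star K * cfc f (A ^ (-1 : ℝ)) * K) * S := by simp only [mul_assoc]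
    _ ≤ S * cfc f (B ^ (-1 : ℝ)) * S :=
        (IsSelfAdjoint.of_nonneg CFC.rpow_nonneg).conjugate_le_conjugate hansen
    _ = cfc (fun x => x * f x⁻¹) B := (hcfc hB).symm

end Transpose

section RealFunctions

variable {k : ℝ → ℝ}

theorem continuousOn_Ioi_of_monotoneOn_of_antitoneOn_div (hk : MonotoneOn k (Ioi 0))
    (hdiv : AntitoneOn (fun x => k x / x) (Ioi 0)) : ContinuousOn k (Ioi 0) := by
  intro x₀ hx₀
  have hmin : Tendsto (fun x => min (k x₀) (k x₀ / x₀ * x)) (𝓝[Ioi 0] x₀) (𝓝 (k x₀)) := by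
    refine (Continuous.tendsto' (by fun_prop) x₀ _ ?_).mono_left nhdsWithin_le_nhds
    rw [div_mul_cancel₀ _ (ne_of_gt hx₀), min_self]
  have hmax : Tendsto (fun x => max (k x₀) (k x₀ / x₀ * x)) (𝓝[Ioi 0] x₀) (𝓝 (k x₀)) := by
    refine (Continuous.tendsto' (by fun_prop) x₀ _ ?_).mono_left nhdsWithin_le_nhds
    rw [div_mul_cancel₀ _ (ne_of_gt hx₀), max_self]
  refine tendsto_of_tendsto_of_tendsto_of_le_of_le' hmin hmax ?_ ?_ <;>
    filter_upwards [self_mem_nhdsWithin] with x hx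
  · rcases le_total x x₀ with h | h
    · exact min_le_of_right_le ((le_div_iff₀ hx).1 (hdiv hx hx₀ h))
    · exact min_le_of_left_le (hk hx₀ hx h)
  · rcases le_total x x₀ with h | h
    · exact le_max_of_le_left (hk hx hx₀ h)
    · exact le_max_of_le_right ((div_le_iff₀ hx).1 (hdiv hx₀ hx h))

theorem continuousOn_mul_comp_inv {f : ℝ → ℝ} (hf : MonotoneOn f (Ioi 0))
    (hk : MonotoneOn (fun x => x * f x⁻¹) (Ioi 0)) :
    ContinuousOn (fun x => x * f x⁻¹) (Ioi 0) := by
  refine continuousOn_Ioi_of_monotoneOn_of_antitoneOn_div hk fun x hx y hy hxy => ?_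
  simp only [mul_div_cancel_left₀ _ (mem_Ioi.1 hx).ne', mul_div_cancel_left₀ _ (mem_Ioi.1 hy).ne']
  exact hf (mem_Ioi.2 (inv_pos.2 hy)) (mem_Ioi.2 (inv_pos.2 hx)) (inv_anti₀ hx hxy)

theorem continuousOn_extendFrom_Ioi {a : ℝ} (hk : MonotoneOn k (Ioi a))
    (hbdd : BddBelow (k '' Ioi a)) (hc : ContinuousOn k (Ioi a)) :
    ContinuousOn (extendFrom (Ioi a) k) (Ici a) := by
  refine continuousOn_extendFrom (closure_Ioi a).ge fun x hx => ?_
  rcases (mem_Ici.1 hx).eq_or_lt with rfl | hax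
  · exact ⟨_, hk.tendsto_nhdsGT hbdd⟩
  · exact ⟨k x, hc x hax⟩

end RealFunctions

/-- The transpose of `f`: the function `x ↦ x * f x⁻¹` on `(0, ∞)`, with value at `0` its limit
from the right. -/
noncomputable def transposeFun (f : ℝ → ℝ) : ℝ → ℝ :=
  extendFrom (Ioi 0) fun x => x * f x⁻¹

namespace OperatorMonotone

variable {f : ℝ → ℝ}

theorem nonneg (hf : OperatorMonotone f) (h0 : 0 ≤ f 0) {x : ℝ} (hx : 0 ≤ x) : 0 ≤ f x :=
  h0.trans ((operatorMonotoneOn_Ici_zero_iff.2 hf).monotoneOn self_mem_Ici hx hx)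

theorem mul_comp_inv (hf : OperatorMonotone f) (h0 : 0 ≤ f 0) :
    OperatorMonotoneOn (fun x => x * f x⁻¹) (Ioi 0) :=
  (operatorMonotoneOn_Ici_zero_iff.2 hf).mul_comp_inv h0

theorem continuousOn_mul_comp_inv (hf : OperatorMonotone f) (h0 : 0 ≤ f 0) :
    ContinuousOn (fun x => x * f x⁻¹) (Ioi 0) :=
  _root_.continuousOn_mul_comp_inv
    ((operatorMonotoneOn_Ici_zero_iff.2 hf).monotoneOn.mono Ioi_subset_Ici_self)
    (hf.mul_comp_inv h0).monotoneOn

theorem transposeFun_of_pos (hf : OperatorMonotone f) (h0 : 0 ≤ f 0) {x : ℝ} (hx : 0 < x) :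
    transposeFun f x = x * f x⁻¹ :=
  extendFrom_extends (hf.continuousOn_mul_comp_inv h0) x hx

theorem continuousOn_transposeFun (hf : OperatorMonotone f) (h0 : 0 ≤ f 0) :
    ContinuousOn (transposeFun f) (Ici 0) := by
  refine continuousOn_extendFrom_Ioi (hf.mul_comp_inv h0).monotoneOn ⟨0, ?_⟩
    (hf.continuousOn_mul_comp_inv h0)
  rintro _ ⟨x, hx, rfl⟩
  exact mul_nonneg hx.le (hf.nonneg h0 (inv_pos.2 hx).le)

theorem operatorMonotone_transposeFun (hf : OperatorMonotone f) (h0 : 0 ≤ f 0) :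
    OperatorMonotone (transposeFun f) :=
  operatorMonotoneOn_Ici_zero_iff.1 <|
    ((hf.mul_comp_inv h0).congr fun _ hx => (hf.transposeFun_of_pos h0 hx).symm).Ici_of_Ioi
      (hf.continuousOn_transposeFun h0)

theorem mapsTo_transposeFun (hf : OperatorMonotone f) (h0 : 0 ≤ f 0) :
    MapsTo (transposeFun f) (Ici 0) (Ici 0) := by
  have hpos : MapsTo (transposeFun f) (Ioi 0) (Ici 0) := fun x hx => by
    rw [hf.transposeFun_of_pos h0 hx]
    exact mul_nonneg hx.le (hf.nonneg h0 (inv_pos.2 hx).le)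
  simpa only [closure_Ioi, closure_Ici] using
    hpos.closure_of_continuousOn (by simpa only [closure_Ioi] using hf.continuousOn_transposeFun h0)

end OperatorMonotone

end

theorem stmt15_general (f : ℝ → ℝ) (h0 : 0 ≤ f 0) (hm : OperatorMonotone f) :
    ∃ g : ℝ → ℝ, ContinuousOn g (Set.Ici 0) ∧ (∀ x : ℝ, 0 ≤ x → 0 ≤ g x) ∧
      OperatorMonotone g ∧ ∀ x : ℝ, 0 < x → g x = x * f (1 / x) := by
  refine ⟨transposeFun f, hm.continuousOn_transposeFun h0, fun x hx => hm.mapsTo_transposeFun h0 hx,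
    hm.operatorMonotone_transposeFun h0, fun x hx => ?_⟩
  rw [hm.transposeFun_of_pos h0 hx, one_div]

theorem stmt15 (f : ℝ → ℝ) (hc : ContinuousOn f (Set.Ici 0))
    (hnn : ∀ x : ℝ, 0 ≤ x → 0 ≤ f x) (hm : OperatorMonotone f) :
    ∃ g : ℝ → ℝ, ContinuousOn g (Set.Ici 0) ∧ (∀ x : ℝ, 0 ≤ x → 0 ≤ g x) ∧
      OperatorMonotone g ∧ ∀ x : ℝ, 0 < x → g x = x * f (1 / x) := by
  exact stmt15_general f (hnn 0 le_rfl) hm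
end
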